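/- Let d ∈ ℕ, let A_1, …, A_d be positive real numbers, and let Φ = Φ_A. Let P be a d-tuple of integer polynomials, P(n) = (P_1(n),…,P_d(n)), such that the real polynomial ∑_{i=1}^d A_i P_i(n) is nonconstant, and let g ∈ ℤ^d with −g ∈ Φ. Then there exist Q ∈ ℕ and L ∈ ℕ such that either for all n > L and all i ∈ {0,1,…,Q−1} one has g + P((n−1)Q+i) <_Φ P(nQ+i), or for all n > L and all i ∈ {0,1,…,Q−1} one has g + P((n+1)Q+i) <_Φ P(nQ+i). -/

import Mathlib

open Finset

/-- The partial weighted sum `∑_{l=1}^{t} A_l n_l`. -/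
noncomputable def phiSum {d : ℕ} (A : Fin d → ℝ) (n : Fin d → ℤ) (t : ℕ) : ℝ :=
  ∑ l : Fin d, if (l : ℕ) < t then A l * (n l : ℝ) else 0

/-- The algebraic past `Φ_A ⊆ ℤ^d` associated to positive weights `A_1, …, A_d`. -/
noncomputable def PhiA {d : ℕ} (A : Fin d → ℝ) : Set (Fin d → ℤ) :=
  {n | ∃ j < d, (∀ k < j, phiSum A n (d - k) = 0) ∧ phiSum A n (d - j) < 0}

namespace Polynomial

theorem exists_pos_eventually_le_eval_derivative (R : ℝ[X]) (hdeg : 0 < R.natDegree)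
    (hlc : 0 < R.leadingCoeff) :
    ∃ ε > 0, ∃ M : ℝ, ∀ x ≥ M, ε ≤ R.derivative.eval x := by
  have hlc' : 0 < R.derivative.leadingCoeff := by
    rw [leadingCoeff_derivative]
    exact mul_pos hlc (by exact_mod_cast hdeg)
  by_cases h : 0 < R.derivative.degree
  · have ht := tendsto_atTop_of_leadingCoeff_nonneg R.derivative h hlc'.le
    obtain ⟨M, hM⟩ := Filter.eventually_atTop.1 (ht.eventually_ge_atTop 1)
    exact ⟨1, one_pos, M, hM⟩
  · have hC := eq_C_of_degree_le_zero (not_lt.1 h)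
    rw [hC, leadingCoeff_C] at hlc'
    refine ⟨_, hlc', 0, fun x _ => ?_⟩
    conv_rhs => rw [hC, eval_C]

theorem exists_shift_lt_eval_sub (R : ℝ[X]) (hdeg : 0 < R.natDegree)
    (hlc : 0 < R.leadingCoeff) (c : ℝ) :
    ∃ Q L : ℕ, 0 < Q ∧ ∀ m : ℕ, L ≤ m → c < R.eval ((m + Q : ℕ) : ℝ) - R.eval (m : ℝ) := by
  obtain ⟨ε, hε, M, hM⟩ := R.exists_pos_eventually_le_eval_derivative hdeg hlc
  obtain ⟨Q, hQ⟩ := exists_nat_gt (max 0 (c / ε))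
  obtain ⟨L, hL⟩ := exists_nat_ge M
  refine ⟨Q, L, by exact_mod_cast (le_max_left _ _).trans_lt hQ, fun m hm => ?_⟩
  have hmM : M ≤ (m : ℝ) := hL.trans (by exact_mod_cast hm)
  have hmv := (convex_Ici M).mul_sub_le_image_sub_of_le_deriv (f := fun x => R.eval x)
    R.continuous.continuousOn R.differentiable.differentiableOn (C := ε)
    (fun x hx => by
      rw [Polynomial.deriv]
      exact hM x (interior_subset hx))
    m hmM ((m + Q : ℕ) : ℝ) (by push_cast; exact hmM.trans (by simp)) (by simp)
  have hc : c < ε * Q := by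
    rw [mul_comm, ← div_lt_iff₀ hε]
    exact (le_max_right _ _).trans_lt hQ
  push_cast at hmv ⊢
  linarith [hmv, show ε * ((m : ℝ) + Q - m) = ε * Q by ring]

end Polynomial

theorem mem_PhiA_of_sum_neg {d : ℕ} {A : Fin d → ℝ} {v : Fin d → ℤ}
    (h : ∑ l, A l * (v l : ℝ) < 0) : v ∈ PhiA A := by
  have hd : 0 < d := by
    rcases Nat.eq_zero_or_pos d with rfl | hd
    · simp at h
    · exact hd
  exact ⟨0, hd, by simp, by simpa [phiSum] using h⟩

/-- The real polynomial `∑ i, A i * P i`. -/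
noncomputable def weightedSum {d : ℕ} (A : Fin d → ℝ) (P : Fin d → Polynomial ℤ) :
    Polynomial ℝ :=
  ∑ i, Polynomial.C (A i) * (P i).map (Int.castRingHom ℝ)

theorem eval_weightedSum {d : ℕ} (A : Fin d → ℝ) (P : Fin d → Polynomial ℤ) (n : ℤ) :
    (weightedSum A P).eval (n : ℝ) = ∑ i, A i * (((P i).eval n : ℤ) : ℝ) := by
  simp [weightedSum, Polynomial.eval_finsetSum, Polynomial.eval_intCast_map]

theorem mem_PhiA_of_lt_eval_weightedSum_sub {d : ℕ} {A : Fin d → ℝ} {P : Fin d → Polynomial ℤ}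
    {g : Fin d → ℤ} {a b : ℕ}
    (h : ∑ i, A i * (g i : ℝ) < (weightedSum A P).eval (b : ℝ) - (weightedSum A P).eval (a : ℝ)) :
    (fun t => g t + (P t).eval (a : ℤ) - (P t).eval (b : ℤ)) ∈ PhiA A := by
  apply mem_PhiA_of_sum_neg
  have ha := eval_weightedSum A P a
  have hb := eval_weightedSum A P b
  rw [Int.cast_natCast] at ha hb
  rw [ha, hb] at h
  simp only [Int.cast_sub, Int.cast_add, mul_sub, mul_add, sum_sub_distrib, sum_add_distrib]
  linarith

/-- If `∑_i A_i P_i(n)` is nonconstant and `-g ∈ Φ_A`, then there are `Q, L ∈ ℕ` such that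
either `g + P((n-1)Q+i) <_Φ P(nQ+i)` for all `n > L` and `0 ≤ i < Q`, or
`g + P((n+1)Q+i) <_Φ P(nQ+i)` for all `n > L` and `0 ≤ i < Q`. -/
theorem exists_block_phi_increasing
    (d : ℕ) (A : Fin d → ℝ) (hA : ∀ i, 0 < A i)
    (P : Fin d → Polynomial ℤ)
    (hnc : ∃ n₁ n₂ : ℤ,
      ∑ i, A i * (((P i).eval n₁ : ℤ) : ℝ) ≠ ∑ i, A i * (((P i).eval n₂ : ℤ) : ℝ))
    (g : Fin d → ℤ) (hg : -g ∈ PhiA A) :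
    ∃ Q L : ℕ, 0 < Q ∧
      ((∀ n : ℕ, L < n → ∀ i : ℕ, i < Q →
          (fun t => g t + (P t).eval (((n - 1) * Q + i : ℕ) : ℤ) -
            (P t).eval ((n * Q + i : ℕ) : ℤ)) ∈ PhiA A) ∨
       (∀ n : ℕ, L < n → ∀ i : ℕ, i < Q →
          (fun t => g t + (P t).eval (((n + 1) * Q + i : ℕ) : ℤ) -
            (P t).eval ((n * Q + i : ℕ) : ℤ)) ∈ PhiA A)) := by
  have hdeg : 0 < (weightedSum A P).natDegree := by
    refine Nat.pos_of_ne_zero fun h0 => ?_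
    obtain ⟨n₁, n₂, hne⟩ := hnc
    rw [← eval_weightedSum, ← eval_weightedSum, Polynomial.eq_C_of_natDegree_eq_zero h0] at hne
    simp at hne
  have hne : (weightedSum A P).leadingCoeff ≠ 0 := by
    rw [Ne, Polynomial.leadingCoeff_eq_zero]
    intro h
    simp [h] at hdeg
  rcases hne.lt_or_gt with hneg | hpos
  · obtain ⟨Q, L, hQ, hL⟩ := (-weightedSum A P).exists_shift_lt_eval_sub
      (by rwa [Polynomial.natDegree_neg]) (by rw [Polynomial.leadingCoeff_neg]; linarith)
      (∑ i, A i * (g i : ℝ))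
    refine ⟨Q, L, hQ, Or.inr fun n hn i _ => mem_PhiA_of_lt_eval_weightedSum_sub ?_⟩
    have h := hL (n * Q + i) (by nlinarith)
    rw [show n * Q + i + Q = (n + 1) * Q + i by ring] at h
    simp only [Polynomial.eval_neg] at h
    linarith
  · obtain ⟨Q, L, hQ, hL⟩ := (weightedSum A P).exists_shift_lt_eval_sub hdeg hpos
      (∑ i, A i * (g i : ℝ))
    refine ⟨Q, L, hQ, Or.inl fun n hn i _ => mem_PhiA_of_lt_eval_weightedSum_sub ?_⟩
    obtain ⟨k, rfl⟩ : ∃ k, n = k + 1 := ⟨n - 1, by omega⟩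
    have h := hL (k * Q + i) (by nlinarith)
    rwa [show k * Q + i + Q = (k + 1) * Q + i by ring] at h
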